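/- For every positive integer m and every real x ≠ 0, the m-th derivative of the harmonic based exponential function satisfies (d/dx)^m ₕe(x) = ₕe(x) + ∑_{r=0}^{m-1} (d/dx)^r [(e^x - 1 - x)/x]. -/

import Mathlib

open Real MeasureTheory

/-- The `n`-th harmonic number `h_n = ∑_{r=1}^n 1/r`. -/
noncomputable def harm (n : ℕ) : ℝ := ∑ r ∈ Finset.range n, 1 / (r + 1 : ℝ)

/-- The harmonic based exponential function `ₕe(x) = 1 + ∑_{n=1}^∞ h_n x^n / n!`. -/
noncomputable def he (x : ℝ) : ℝ :=
  1 + ∑' n : ℕ, harm (n + 1) * x ^ (n + 1) / (Nat.factorial (n + 1) : ℝ)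

/-!
Differentiating an exponential generating function shifts its coefficients, and
`h_{n+1} = h_n + 1/(n+1)`, where the coefficients `1/(n+1)` generate `(e^x - 1)/x`. Hence
`f = ₕe` solves `f' = f + g` with `g x = (e^x - 1 - x)/x`, the `-x` in the numerator accounting for
the constant term `1` of `ₕe`. Differentiating `r` times, `f^(r+1) - f^(r) = g^(r)`, and the sum
over `r < m` telescopes.
-/

open scoped Nat Topology

section LinearODE

variable {𝕜 F : Type*} [NontriviallyNormedField 𝕜] [NormedAddCommGroup F] [NormedSpace 𝕜 F]
  {f g : 𝕜 → F} {x : 𝕜}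

theorem contDiffAt_of_hasDerivAt_self_add {n : ℕ}
    (hf : ∀ᶠ y in 𝓝 x, HasDerivAt f (f y + g y) y) (hg : ContDiffAt 𝕜 n g x) :
    ContDiffAt 𝕜 n f x := by
  induction n with
  | zero =>
    exact contDiffAt_zero.mpr ⟨_, hf, fun _ hy ↦ hy.continuousAt.continuousWithinAt⟩
  | succ n ih =>
    have hgn : ContDiffAt 𝕜 n g x := hg.of_le (mod_cast n.le_succ)
    have hsum : ContDiffAt 𝕜 n (fun y ↦ f y + g y) x := (ih hgn).add hgn
    exact contDiffAt_succ_iff_hasFDerivAt.mpr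
      ⟨fun y ↦ .toSpanSingleton 𝕜 (f y + g y), ⟨_, hf, fun _ hy ↦ hy.hasFDerivAt⟩,
        (ContinuousLinearMap.toSpanSingletonCLE (𝕜 := 𝕜) (E := F)).contDiff.contDiffAt.comp x hsum⟩

theorem iteratedDeriv_succ_of_hasDerivAt_self_add {n : ℕ}
    (hf : ∀ᶠ y in 𝓝 x, HasDerivAt f (f y + g y) y) (hg : ContDiffAt 𝕜 n g x) :
    iteratedDeriv (n + 1) f x = iteratedDeriv n f x + iteratedDeriv n g x := by
  have hderiv : deriv f =ᶠ[𝓝 x] f + g := hf.mono fun _ hy ↦ hy.deriv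
  rw [iteratedDeriv_succ', hderiv.iteratedDeriv_eq,
    iteratedDeriv_add (contDiffAt_of_hasDerivAt_self_add hf hg) hg]

theorem iteratedDeriv_eq_self_add_sum_of_hasDerivAt {m : ℕ}
    (hf : ∀ᶠ y in 𝓝 x, HasDerivAt f (f y + g y) y) (hg : ∀ r < m, ContDiffAt 𝕜 r g x) :
    iteratedDeriv m f x = f x + ∑ r ∈ Finset.range m, iteratedDeriv r g x := by
  have htelescope : ∑ r ∈ Finset.range m, iteratedDeriv r g x = iteratedDeriv m f x - f x :=
    calc ∑ r ∈ Finset.range m, iteratedDeriv r g x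
        = ∑ r ∈ Finset.range m, (iteratedDeriv (r + 1) f x - iteratedDeriv r f x) :=
          Finset.sum_congr rfl fun r hr ↦ by
            rw [iteratedDeriv_succ_of_hasDerivAt_self_add hf (hg r (Finset.mem_range.mp hr)),
              add_sub_cancel_left]
      _ = iteratedDeriv m f x - f x := by
          rw [Finset.sum_range_sub (fun r ↦ iteratedDeriv r f x), iteratedDeriv_zero]
  rw [htelescope, add_sub_cancel]

end LinearODE

section ExpGenFun

variable {𝕜 : Type*} [NontriviallyNormedField 𝕜]

/-- The exponential generating function `∑ aₙ xⁿ / n!` of the sequence `a`, as a function on `𝕜`.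
It takes the junk value `0` where the series diverges. -/
noncomputable def expGenFun (a : ℕ → 𝕜) (x : 𝕜) : 𝕜 := ∑' n, a n * x ^ n / n !

theorem expGenFun_eq_zero_add {a : ℕ → 𝕜} {x : 𝕜}
    (ha : Summable fun n ↦ a n * x ^ n / n !) :
    expGenFun a x = a 0 + ∑' n, a (n + 1) * x ^ (n + 1) / (n + 1)! := by
  simpa [expGenFun] using ha.tsum_eq_zero_add

theorem hasDerivAt_mul_pow_succ_div_factorial [CharZero 𝕜] (c : 𝕜) (n : ℕ) (x : 𝕜) :
    HasDerivAt (fun y ↦ c * y ^ (n + 1) / (n + 1)!) (c * x ^ n / n !) x := by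
  refine (((hasDerivAt_pow (n + 1) x).const_mul c).div_const _).congr_deriv ?_
  have : (n ! : 𝕜) ≠ 0 := mod_cast n.factorial_ne_zero
  have : (n + 1 : 𝕜) ≠ 0 := n.cast_add_one_ne_zero
  rw [Nat.factorial_succ]
  push_cast
  field_simp

end ExpGenFun

section TermwiseDerivative

variable {𝕜 : Type*} [RCLike 𝕜]

-- Doubling the radius absorbs the factor `n + 1` that differentiation produces.
theorem norm_mul_pow_div_factorial_le (c : 𝕜) (n : ℕ) {x : 𝕜} {R : ℝ} (hR : 1 ≤ R)
    (hx : ‖x‖ ≤ R) :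
    ‖c * x ^ n / (n ! : 𝕜)‖ ≤ ‖c * ((2 * R : ℝ) : 𝕜) ^ (n + 1) / ((n + 1)! : 𝕜)‖ := by
  have hn : (n + 1 : ℝ) ≤ 2 ^ (n + 1) := mod_cast (n + 1).lt_two_pow_self.le
  have hpow : (n + 1) * ‖x‖ ^ n ≤ (2 * R) ^ (n + 1) :=
    calc (n + 1) * ‖x‖ ^ n ≤ 2 ^ (n + 1) * R ^ (n + 1) := by
          gcongr
          exact (pow_le_pow_left₀ (norm_nonneg x) hx n).trans (pow_le_pow_right₀ hR n.le_succ)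
      _ = (2 * R) ^ (n + 1) := (mul_pow ..).symm
  calc ‖c * x ^ n / (n ! : 𝕜)‖ = ‖c‖ * ((n + 1) * ‖x‖ ^ n) / (n + 1)! := by
        rw [norm_div, norm_mul, norm_pow, RCLike.norm_natCast, Nat.factorial_succ]
        push_cast
        field_simp
    _ ≤ ‖c‖ * (2 * R) ^ (n + 1) / (n + 1)! := by gcongr
    _ = ‖c * ((2 * R : ℝ) : 𝕜) ^ (n + 1) / ((n + 1)! : 𝕜)‖ := by
        rw [norm_div, norm_mul, norm_pow, RCLike.norm_natCast,
          RCLike.norm_of_nonneg (by positivity)]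

theorem hasDerivAt_expGenFun {a : ℕ → 𝕜}
    (ha : ∀ x, Summable fun n ↦ a n * x ^ n / n !) (x : 𝕜) :
    HasDerivAt (expGenFun a) (expGenFun (fun n ↦ a (n + 1)) x) x := by
  set R : ℝ := ‖x‖ + 1
  have hR : 1 ≤ R := le_add_of_nonneg_left (norm_nonneg x)
  have htail (y : 𝕜) : Summable fun n ↦ a (n + 1) * y ^ (n + 1) / (n + 1)! :=
    (summable_nat_add_iff (f := fun n ↦ a n * y ^ n / n !) 1).mpr (ha y)
  have hbound : ∀ n, ∀ y ∈ Metric.ball (0 : 𝕜) R, ‖a (n + 1) * y ^ n / (n ! : 𝕜)‖ ≤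
      ‖a (n + 1) * ((2 * R : ℝ) : 𝕜) ^ (n + 1) / ((n + 1)! : 𝕜)‖ := fun n _ hy ↦
    norm_mul_pow_div_factorial_le (a (n + 1)) n hR (mem_ball_zero_iff.mp hy).le
  have hderiv : HasDerivAt (fun y ↦ ∑' n, a (n + 1) * y ^ (n + 1) / (n + 1)!)
      (∑' n, a (n + 1) * x ^ n / n !) x :=
    hasDerivAt_tsum_of_isPreconnected (htail _).norm Metric.isOpen_ball Metric.isPreconnected_ball
      (fun n y _ ↦ hasDerivAt_mul_pow_succ_div_factorial (a (n + 1)) n y) hbound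
      (Metric.mem_ball_self (by positivity)) (htail 0) (mem_ball_zero_iff.mpr (lt_add_one _))
  exact (hderiv.const_add (a 0)).congr_of_eventuallyEq
    (.of_forall fun y ↦ expGenFun_eq_zero_add (ha y))

end TermwiseDerivative

theorem hasSum_one_div_succ_mul_pow_div_factorial {x : ℝ} (hx : x ≠ 0) :
    HasSum (fun n : ℕ ↦ 1 / (n + 1 : ℝ) * x ^ n / n !) ((exp x - 1) / x) := by
  have hexp : HasSum (fun n : ℕ ↦ x ^ n / n !) (exp x) := by
    rw [exp_eq_exp_ℝ]
    exact NormedSpace.expSeries_div_hasSum_exp x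
  have htail : HasSum (fun n : ℕ ↦ x ^ (n + 1) / (n + 1)!) (exp x - 1) := by
    simpa using (hasSum_nat_add_iff' 1).mpr hexp
  refine (htail.div_const x).congr_fun fun n ↦ ?_
  rw [pow_succ, Nat.factorial_succ]
  push_cast
  field_simp

theorem harm_zero : harm 0 = 0 := Finset.sum_range_zero _

theorem harm_succ (n : ℕ) : harm (n + 1) = harm n + 1 / (n + 1 : ℝ) := Finset.sum_range_succ _ _

theorem harm_nonneg (n : ℕ) : 0 ≤ harm n := Finset.sum_nonneg fun _ _ ↦ by positivity

theorem harm_le_self (n : ℕ) : harm n ≤ n := by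
  have hterm (r : ℕ) : 1 / (r + 1 : ℝ) ≤ 1 := div_le_self zero_le_one (by simp)
  simpa [harm] using Finset.sum_le_card_nsmul (Finset.range n) _ 1 fun r _ ↦ hterm r

theorem summable_harm_mul_pow_div_factorial (x : ℝ) :
    Summable fun n ↦ harm n * x ^ n / n ! := by
  refine .of_norm_bounded (summable_pow_div_factorial (2 * |x|)) fun n ↦ ?_
  have hharm : harm n ≤ 2 ^ n := (harm_le_self n).trans (mod_cast n.lt_two_pow_self.le)
  rw [norm_div, norm_mul, norm_pow, RCLike.norm_natCast, norm_of_nonneg (harm_nonneg n),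
    norm_eq_abs, mul_pow]
  gcongr

theorem he_eq_one_add_expGenFun (x : ℝ) : he x = 1 + expGenFun harm x := by
  rw [he, expGenFun_eq_zero_add (summable_harm_mul_pow_div_factorial x), harm_zero, zero_add]

theorem expGenFun_harm_succ {x : ℝ} (hx : x ≠ 0) :
    expGenFun (fun n ↦ harm (n + 1)) x = expGenFun harm x + (exp x - 1) / x := by
  have hsum := (summable_harm_mul_pow_div_factorial x).hasSum.add
    (hasSum_one_div_succ_mul_pow_div_factorial hx)
  refine (hsum.congr_fun fun n ↦ ?_).tsum_eq
  simp only [harm_succ]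
  ring

theorem hasDerivAt_he {x : ℝ} (hx : x ≠ 0) :
    HasDerivAt he (he x + (exp x - 1 - x) / x) x := by
  have hderiv := (hasDerivAt_expGenFun summable_harm_mul_pow_div_factorial x).const_add 1
  rw [← funext he_eq_one_add_expGenFun, expGenFun_harm_succ hx] at hderiv
  refine hderiv.congr_deriv ?_
  rw [he_eq_one_add_expGenFun, sub_div _ x, div_self hx]
  ring

/-- For `m ≥ 1` and `x ≠ 0`,
`(d/dx)^m ₕe(x) = ₕe(x) + ∑_{r=0}^{m-1} (d/dx)^r [(e^x - 1 - x)/x]`. -/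
theorem he_iteratedDeriv_recurrence (m : ℕ) (hm : 0 < m) (x : ℝ) (hx : x ≠ 0) :
    iteratedDeriv m he x =
      he x + ∑ r ∈ Finset.range m,
        iteratedDeriv r (fun t : ℝ => (Real.exp t - 1 - t) / t) x := by
  have hode : ∀ᶠ y in 𝓝 x, HasDerivAt he (he y + (exp y - 1 - y) / y) y :=
    (eventually_ne_nhds hx).mono fun _ ↦ hasDerivAt_he
  have hsmooth (r : ℕ) : ContDiffAt ℝ r (fun t : ℝ ↦ (exp t - 1 - t) / t) x :=
    ContDiffAt.div (by fun_prop) contDiffAt_id hx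
  exact iteratedDeriv_eq_self_add_sum_of_hasDerivAt hode fun r _ ↦ hsmooth r
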